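/- There exist a group G and an infinite set X with a sharply 3-transitive action of G on X such that every element of order 2 in G fixes exactly one point of X and no two distinct elements of order 2 in G commute. -/

import Mathlib

/-- An action is sharply 3-transitive if any triple of pairwise distinct points is taken
to any other such triple by a unique group element. -/
def SharplyThreeTransitive (G X : Type*) [Group G] [MulAction G X] : Prop :=
  ∀ x y z x' y' z' : X, x ≠ y → x ≠ z → y ≠ z → x' ≠ y' → x' ≠ z' → y' ≠ z' →
    ∃! g : G, g • x = x' ∧ g • y = y' ∧ g • z = z'

/-- A group `G` acting sharply 3-transitively on an infinite set `X` such that every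
involution of `G` fixes exactly one point and no two distinct involutions commute. -/
structure SharplyThreeTransitiveCharTwoWitness where
  G : Type*
  [grp : Group G]
  X : Type*
  [act : MulAction G X]
  infinite : Infinite X
  sharply3transitive : SharplyThreeTransitive G X
  involutions_unique_fixed_point : ∀ t : G, orderOf t = 2 → ∃! x : X, t • x = x
  involutions_no_commute : ∀ s t : G, orderOf s = 2 → orderOf t = 2 → s ≠ t →
    s * t ≠ t * s

/-!
The group is `F ⋊ S₃` with `F` free on a set of letters permuted by `S₃`. Comparing the two halves
of a reduced word shows that every involution of `F ⋊ S₃` is conjugate to one in `S₃`; in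
particular none lies in `F`. Two commuting involutions have commuting, hence equal, images in `S₃`,
so their product lies in `F` and squares to `1`: they are equal.

`S₃` permutes three base points and a countable set of free orbits, so that its involutions have
exactly one fixed point. The action of the letters is built from finite `S₃`-equivariant partial
actions. To make a letter defined everywhere, its missing edges are sent to new free orbits; to move
the base triple to a given one, a new letter is introduced. A letter commuting with a symmetry is
forced to preserve its fixed point; this is the source of `loops`. Sharpness is expressed by the
triples: up to the symmetries, closed walks in the graph of triples spell `1`, as witnessed by
`IsPotential`, so both extension steps only have to extend a potential.
-/

namespace TripleAction

local notation "S₃" => Equiv.Perm (Fin 3)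

section Reaches

variable {L L' X X' : Type*} {E : L → X → X → Prop} {f g : FreeGroup L} {p q r : X}

/-- `Reaches E f p q`: in the graph on `X` with an edge labelled `y` from `p` to `q` whenever
`E y p q`, some walk from `p` to `q` spells `f`, edges walked backwards contributing the inverse of
their label. The letter of the last edge stands on the left, as for group actions. -/
inductive Reaches (E : L → X → X → Prop) : FreeGroup L → X → X → Prop
  | refl (p : X) : Reaches E 1 p p
  | forward {f : FreeGroup L} {p q r : X} {y : L} :
      Reaches E f p q → E y q r → Reaches E (FreeGroup.of y * f) p r
  | backward {f : FreeGroup L} {p q r : X} {y : L} :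
      Reaches E f p q → E y r q → Reaches E ((FreeGroup.of y)⁻¹ * f) p r

namespace Reaches

theorem edge {y : L} (h : E y p q) : Reaches E (FreeGroup.of y) p q := by
  simpa only [mul_one] using (refl p).forward h

theorem trans (hf : Reaches E f p q) (hg : Reaches E g q r) : Reaches E (g * f) p r := by
  induction hg with
  | refl => simpa only [one_mul] using hf
  | forward _ h ih => simpa only [mul_assoc] using (ih hf).forward h
  | backward _ h ih => simpa only [mul_assoc] using (ih hf).backward h

theorem symm (hf : Reaches E f p q) : Reaches E f⁻¹ q p := by
  induction hf with
  | refl => simpa only [inv_one] using refl _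
  | forward _ h ih => simpa only [mul_inv_rev, mul_one] using ((refl _).backward h).trans ih
  | backward _ h ih =>
    simpa only [mul_inv_rev, inv_inv, mul_one] using ((refl _).forward h).trans ih

theorem map {E' : L' → X' → X' → Prop} (φ : FreeGroup L →* FreeGroup L') (h : X → X')
    (hE : ∀ y p q, E y p q → Reaches E' (φ (FreeGroup.of y)) (h p) (h q))
    (hf : Reaches E f p q) : Reaches E' (φ f) (h p) (h q) := by
  induction hf with
  | refl => simpa only [map_one] using refl _
  | forward _ hy ih => simpa only [map_mul] using ih.trans (hE _ _ _ hy)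
  | backward _ hy ih => simpa only [map_mul, map_inv] using ih.trans (hE _ _ _ hy).symm

theorem mono {E' : L → X → X → Prop} (hE : ∀ y p q, E y p q → E' y p q)
    (hf : Reaches E f p q) : Reaches E' f p q :=
  hf.map (MonoidHom.id _) id fun y p q h => edge (hE y p q h)

theorem smul_iff {M : Type*} [Group M] [MulAction M X] {π : L → M} :
    Reaches (fun y p q => π y • p = q) f p q ↔ FreeGroup.lift π f • p = q := by
  constructor
  · intro hf
    induction hf with
    | refl => rw [map_one, one_smul]
    | forward _ hy ih => rw [map_mul, mul_smul, ih, FreeGroup.lift_apply_of, hy]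
    | backward _ hy ih =>
      rw [map_mul, mul_smul, ih, map_inv, FreeGroup.lift_apply_of, inv_smul_eq_iff, hy]
  · rintro rfl
    induction f using FreeGroup.induction_on generalizing p with
    | C1 => rw [map_one, one_smul]; exact refl p
    | of y => rw [FreeGroup.lift_apply_of]; exact edge rfl
    | inv_of y _ =>
      rw [map_inv, FreeGroup.lift_apply_of]
      exact (edge (smul_inv_smul (π y) p)).symm
    | mul f g ihf ihg => rw [map_mul, mul_smul]; exact ihg.trans ihf

end Reaches

/-- By Cantor's theorem, the singletons leave enough room in the power set. -/
theorem exists_perm_set_extending {R : X → X → Prop} (hR : Relator.BiUnique R) :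
    ∃ e : Equiv.Perm (Set X), ∀ p q, R p q → e {p} = {q} := by
  let s : Set (Set X) := {A | ∃ p, (∃ q, R p q) ∧ {p} = A}
  have mem_s (A : s) : ∃ p q, R p q ∧ {p} = (A : Set X) :=
    let ⟨p, ⟨q, h⟩, hA⟩ := A.2
    ⟨p, q, h, hA⟩
  choose source target hR_target hsource using mem_s
  let image : s ↪ Set X := ⟨fun A => {target A}, fun A B h => Subtype.ext <| by
    rw [← hsource A, ← hsource B,
      hR.1 (hR_target A) (Set.singleton_injective h ▸ hR_target B)]⟩
  have card_lt : Cardinal.mk s < Cardinal.mk (Set X) :=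
    (Cardinal.mk_image_le (f := fun p : X => ({p} : Set X)) (s := {p | ∃ q, R p q})).trans_lt <|
      (Cardinal.mk_set_le _).trans_lt (Cardinal.mk_set (α := X) ▸ Cardinal.cantor _)
  obtain ⟨e, he⟩ := Cardinal.extend_function_of_lt image card_lt ⟨Equiv.refl _⟩
  refine ⟨e, fun p q h => ?_⟩
  have hp : {p} ∈ s := ⟨p, ⟨q, h⟩, rfl⟩
  have source_eq : source ⟨{p}, hp⟩ = p := Set.singleton_injective (hsource _)
  rw [he ⟨{p}, hp⟩, hR.2 h (source_eq ▸ hR_target ⟨{p}, hp⟩)]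
  rfl

theorem Reaches.target_unique (hE : ∀ y, Relator.BiUnique (E y)) {q' : X}
    (h : Reaches E f p q) (h' : Reaches E f p q') : q = q' := by
  choose π hπ using fun y => exists_perm_set_extending (hE y)
  have lift_eq {q : X} (h : Reaches E f p q) : FreeGroup.lift π f • ({p} : Set X) = {q} :=
    smul_iff.1 <| h.map (E' := fun y A B => π y • A = B) (MonoidHom.id _) ({·}) fun y p q hy =>
      .edge (hπ y p q hy)
  exact Set.singleton_injective ((lift_eq h).symm.trans (lift_eq h'))

theorem Reaches.source_unique (hE : ∀ y, Relator.BiUnique (E y)) {p' : X}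
    (h : Reaches E f p q) (h' : Reaches E f p' q) : p = p' :=
  h.symm.target_unique hE h'.symm

end Reaches

theorem exists_equivariant_extension {G α β : Type*} [Group G] [MulAction G α]
    {act : G → β → β} {R : α → β → Prop} (hR : Relator.RightUnique R)
    (R_smul : ∀ (g : G) {a b}, R a b → R (g • a) (act g b)) {φ : α → β}
    (hφ : ∀ (g : G) (a : α), φ (g • a) = act g (φ a)) :
    ∃ ψ : α → β, (∀ a b, R a b → ψ a = b) ∧ (∀ a, (¬∃ b, R a b) → ψ a = φ a) ∧
      ∀ (g : G) (a : α), ψ (g • a) = act g (ψ a) := by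
  classical
  let ψ : α → β := fun a => if h : ∃ b, R a b then h.choose else φ a
  have ψ_of {a : α} {b : β} (h : R a b) : ψ a = b := by
    have hex : ∃ b, R a b := ⟨b, h⟩
    rw [show ψ a = hex.choose from dif_pos hex]
    exact hR hex.choose_spec h
  have ψ_of_not {a : α} (h : ¬∃ b, R a b) : ψ a = φ a := dif_neg h
  refine ⟨ψ, fun a b => ψ_of, fun a => ψ_of_not, fun g a => ?_⟩
  by_cases h : ∃ b, R a b
  · obtain ⟨b, hb⟩ := h
    rw [ψ_of hb, ψ_of (R_smul g hb)]
  · have h' : ¬∃ b, R (g • a) b := fun ⟨b, hb⟩ =>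
      h ⟨act g⁻¹ b, by simpa only [inv_smul_smul] using R_smul g⁻¹ hb⟩
    rw [ψ_of_not h, ψ_of_not h', hφ]

section SymmetricGroup

theorem perm_eq_of_commute : ∀ σ τ : S₃,
    orderOf σ = 2 → orderOf τ = 2 → Commute σ τ → σ = τ := by
  simp only [orderOf_eq_prime_iff, commute_iff_eq]
  decide

theorem perm_existsUnique_fixed : ∀ σ : S₃, orderOf σ = 2 → ∃! i, σ i = i := by
  simp only [orderOf_eq_prime_iff, ExistsUnique]
  decide

theorem perm_eq_one_of_two_fixed :
    ∀ (σ : S₃) (i j : Fin 3), σ i = i → σ j = j → i ≠ j → σ = 1 := by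
  decide

theorem perm_conj_of_order : ∀ σ τ : S₃,
    (σ = 1 ↔ τ = 1) → (σ ^ 2 = 1 ↔ τ ^ 2 = 1) → ∃ κ, τ = κ * σ * κ⁻¹ := by
  decide

theorem perm_conj_of_generators : ∀ σ τ : S₃, orderOf σ = 2 → orderOf τ = 2 →
    σ ≠ τ → ∃ κ, ∀ i : Fin 2, ![σ, τ] i = κ * Equiv.swap i.castSucc i.succ * κ⁻¹ := by
  simp only [orderOf_eq_prime_iff]
  decide

/-- Two generators of `S₃` of order two can be moved to the standard ones. -/
theorem perm_endomorphism_inner {ψ : S₃ →* S₃}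
    (hψ : Function.Injective ψ) : ∃ κ, ∀ σ, ψ σ = κ * σ * κ⁻¹ := by
  have order_two (i : Fin 2) : orderOf (Equiv.swap i.castSucc i.succ : S₃) = 2 := by
    rw [orderOf_eq_prime_iff]; revert i; decide
  obtain ⟨κ, hκ⟩ := perm_conj_of_generators (ψ (Equiv.swap 0 1)) (ψ (Equiv.swap 1 2))
    ((orderOf_injective ψ hψ _).trans (order_two 0))
    ((orderOf_injective ψ hψ _).trans (order_two 1)) (hψ.ne (by decide))
  have eq_conj : ψ = (MulAut.conj κ).toMonoidHom := by
    refine MonoidHom.eq_of_eqOn_denseM (Equiv.Perm.mclosure_swap_castSucc_succ 2) ?_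
    rintro _ ⟨i, rfl⟩
    refine Eq.trans ?_ (hκ i)
    fin_cases i <;> rfl
  exact ⟨κ, fun σ => DFunLike.congr_fun eq_conj σ⟩

theorem isCyclic_or_surjective {K : Type*} [Group K] {f : K →* S₃}
    (hf : Function.Injective f) : IsCyclic K ∨ Function.Surjective f := by
  have card_perm : Nat.card (S₃) = 6 := by
    rw [Nat.card_eq_fintype_card]; rfl
  have card_dvd : Nat.card K ∣ 6 := card_perm ▸ Subgroup.card_dvd_of_injective f hf
  have card_mem : Nat.card K ∈ Nat.divisors 6 := Nat.mem_divisors.2 ⟨card_dvd, by decide⟩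
  rw [show Nat.divisors 6 = {1, 2, 3, 6} by decide] at card_mem
  have : Finite K := Finite.of_injective f hf
  simp only [Finset.mem_insert, Finset.mem_singleton] at card_mem
  rcases card_mem with h | h | h | h
  · have := (Nat.card_eq_one_iff_unique.1 h).1
    exact .inl inferInstance
  · have : Fact (Nat.Prime 2) := ⟨Nat.prime_two⟩
    exact .inl (isCyclic_of_prime_card h)
  · have : Fact (Nat.Prime 3) := ⟨Nat.prime_three⟩
    exact .inl (isCyclic_of_prime_card h)
  · exact .inr ((Nat.bijective_iff_injective_and_card f).2 ⟨hf, h.trans card_perm.symm⟩).2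

theorem exists_conj_of_injective {K : Type*} [Group K] {f g : K →* S₃}
    (hf : Function.Injective f) (hg : Function.Injective g) :
    ∃ κ, ∀ k, g k = κ * f k * κ⁻¹ := by
  rcases isCyclic_or_surjective hf with ⟨a, ha⟩ | hsurj
  · obtain ⟨κ, hκ⟩ := perm_conj_of_order (f a) (g a)
      (by rw [map_eq_one_iff f hf, map_eq_one_iff g hg])
      (by rw [← map_pow, ← map_pow, map_eq_one_iff f hf, map_eq_one_iff g hg])
    refine ⟨κ, fun k => ?_⟩
    obtain ⟨n, rfl⟩ := ha k
    simp only [map_zpow, hκ, conj_zpow]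
  · let e : K ≃* S₃ := MulEquiv.ofBijective f ⟨hf, hsurj⟩
    obtain ⟨κ, hκ⟩ := perm_endomorphism_inner (ψ := g.comp e.symm.toMonoidHom)
      (hg.comp e.symm.injective)
    refine ⟨κ, fun k => ?_⟩
    rw [← show e k = f k from rfl, ← hκ]
    exact congrArg g (e.symm_apply_apply k).symm

end SymmetricGroup

section FreeGroupInvolutions

variable {α : Type*}

instance {M : Type*} [Monoid M] [MulAction M α] : MulDistribMulAction M (FreeGroup α) where
  smul m := FreeGroup.map (m • ·)
  one_smul f := by
    change FreeGroup.map _ f = f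
    simp only [one_smul, FreeGroup.map.id']
  mul_smul m n f := by
    change FreeGroup.map _ f = FreeGroup.map _ (FreeGroup.map _ f)
    simp only [mul_smul, FreeGroup.map.comp, Function.comp_def]
  smul_mul m := map_mul (FreeGroup.map (m • ·))
  smul_one m := map_one (FreeGroup.map (m • ·))

theorem smul_of {M : Type*} [Monoid M] [MulAction M α] (m : M) (a : α) :
    m • FreeGroup.of a = FreeGroup.of (m • a) :=
  FreeGroup.map.of

theorem exists_eq_append_invRev_map (e : α → α) (w : List (α × Bool))
    (h : w.map (Prod.map e id) = FreeGroup.invRev w) :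
    ∃ v, w = v ++ FreeGroup.invRev (v.map (Prod.map e id)) := by
  have invRev_append_singleton (l : List (α × Bool)) (b : α × Bool) :
      FreeGroup.invRev (l ++ [b]) = (b.1, !b.2) :: FreeGroup.invRev l := by
    simp [FreeGroup.invRev]
  induction w using List.bidirectionalRec with
  | nil => exact ⟨[], rfl⟩
  | singleton a =>
    exact absurd (congrArg Prod.snd (List.singleton_injective h)).symm (Bool.not_ne_self _)
  | cons_append a w b ih =>
    rw [← List.cons_append, invRev_append_singleton, FreeGroup.invRev_cons, List.map_append,
      List.map_cons, List.cons_append, List.cons.injEq] at h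
    obtain ⟨first, rest⟩ := h
    obtain ⟨v, hv⟩ := ih (List.append_inj' rest rfl).1
    have last : FreeGroup.invRev ((a :: v).map (Prod.map e id)) =
        FreeGroup.invRev (v.map (Prod.map e id)) ++ [b] := by
      rw [List.map_cons, FreeGroup.invRev_cons, first]
      simp only [FreeGroup.invRev, List.map_cons, List.map_nil, Bool.not_not,
        List.reverse_singleton]
    refine ⟨a :: v, ?_⟩
    rw [last, List.cons_append, ← List.append_assoc, ← hv]

/-- The reduced word of `f` has even length because its middle letter would be mapped to its own
inverse; `k` is its first half. -/
theorem exists_eq_mul_inv_smul {M : Type*} [Group M] [MulAction M α] (m : M) {f : FreeGroup α}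
    (h : f * m • f = 1) : ∃ k : FreeGroup α, f = k * (m • k)⁻¹ := by
  classical
  have map_toWord : f.toWord.map (Prod.map (m • ·) id) = FreeGroup.invRev f.toWord := by
    have mk_map : FreeGroup.mk (f.toWord.map (Prod.map (m • ·) id)) = f⁻¹ := by
      rw [← eq_inv_of_mul_eq_one_right h]
      nth_rw 2 [← FreeGroup.mk_toWord (x := f)]
      exact FreeGroup.map.mk.symm
    have isReduced : FreeGroup.IsReduced (f.toWord.map (Prod.map (m • ·) id)) :=
      (List.isChain_map _).2 <| FreeGroup.isReduced_toWord.imp fun _ _ hab heq =>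
        hab (MulAction.injective m heq)
    rw [← FreeGroup.toWord_inv, ← mk_map, FreeGroup.toWord_mk, isReduced.reduce_eq]
  obtain ⟨v, hv⟩ := exists_eq_append_invRev_map _ _ map_toWord
  refine ⟨FreeGroup.mk v, ?_⟩
  rw [← FreeGroup.mk_toWord (x := f), hv, ← FreeGroup.mul_mk, ← FreeGroup.inv_mk]
  rfl

/-- The semidirect product of the free group on `α` with a group `M` of symmetries of `α`. For
`M = S₃` it is the group that will act sharply 3-transitively. -/
abbrev FreeSemidirect (α M : Type*) [Group M] [MulAction M α] : Type _ :=
  FreeGroup α ⋊[MulDistribMulAction.toMulAut M (FreeGroup α)] M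

namespace FreeSemidirect

open SemidirectProduct

variable {M : Type*} [Group M] [MulAction M α] {s t : FreeSemidirect α M}

theorem exists_conj_inr (ht : t * t = 1) : ∃ k, t = inl k * inr t.right * (inl k)⁻¹ := by
  obtain ⟨k, hk⟩ := exists_eq_mul_inv_smul t.right (congrArg left ht)
  refine ⟨k, SemidirectProduct.ext ?_ ?_⟩
  · simpa using hk
  · simp

theorem eq_one_of_right_eq_one (ht : t * t = 1) (h : t.right = 1) : t = 1 := by
  obtain ⟨k, hk⟩ := exists_conj_inr ht
  rw [hk, h, map_one, mul_one, mul_inv_cancel]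

theorem orderOf_right (ht : orderOf t = 2) : orderOf t.right = 2 := by
  rw [orderOf_eq_prime_iff, pow_two] at ht ⊢
  exact ⟨congrArg right ht.1, fun h => ht.2 (eq_one_of_right_eq_one ht.1 h)⟩

theorem not_commute (hM : ∀ a b : M, orderOf a = 2 → orderOf b = 2 → Commute a b → a = b)
    (hs : orderOf s = 2) (ht : orderOf t = 2) (hst : s ≠ t) : s * t ≠ t * s := by
  intro hcomm
  have right_eq : s.right = t.right :=
    hM _ _ (orderOf_right hs) (orderOf_right ht) (congrArg right hcomm)
  have s_sq : s * s = 1 := by rw [← pow_two, ← hs, pow_orderOf_eq_one]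
  have t_sq : t * t = 1 := by rw [← pow_two, ← ht, pow_orderOf_eq_one]
  have mul_sq : s * t * (s * t) = 1 := by
    rw [(show Commute t s from hcomm.symm).mul_mul_mul_comm, s_sq, t_sq, mul_one]
  have mul_eq_one : s * t = 1 :=
    eq_one_of_right_eq_one mul_sq <| by rw [mul_right, right_eq, ← mul_right, t_sq, one_right]
  exact hst (by rw [eq_inv_of_mul_eq_one_left mul_eq_one, inv_eq_of_mul_eq_one_left t_sq])

end FreeSemidirect

end FreeGroupInvolutions

section Triples

/-- The set to be acted upon: three base points permuted by `S₃`, and countably many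
free orbits of that group, indexed by their level. -/
inductive Point : Type
  | base (i : Fin 3)
  | free (σ : S₃) (level : ℕ)

namespace Point

instance : MulAction S₃ Point where
  smul σ
    | base i => base (σ i)
    | free τ m => free (σ * τ) m
  one_smul p := by cases p <;> rfl
  mul_smul σ τ p := by cases p <;> rfl

instance : Infinite Point :=
  Infinite.of_injective (free 1) fun _ _ h => (free.inj h).2

instance : Countable Point :=
  Function.Surjective.countable (f := Sum.elim base fun x : S₃ × ℕ => free x.1 x.2) <| by
    rintro (i | ⟨σ, m⟩)
    exacts [⟨.inl i, rfl⟩, ⟨.inr (σ, m), rfl⟩]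

theorem smul_base (σ : S₃) (i : Fin 3) : σ • base i = base (σ i) := rfl

theorem smul_free (σ τ : S₃) (m : ℕ) : σ • free τ m = free (σ * τ) m := rfl

/-- The index of the free orbit containing a point, `none` for the base points. -/
def level : Point → Option ℕ
  | base _ => none
  | free _ m => some m

theorem level_smul (σ : S₃) (p : Point) : (σ • p).level = p.level := by
  cases p <;> rfl

theorem eq_base_of_smul_eq {σ : S₃} (hσ : σ ≠ 1) {p : Point} (h : σ • p = p) :
    ∃ i, p = base i ∧ σ i = i := by
  cases p with
  | base i => exact ⟨i, rfl, base.inj h⟩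
  | free τ m => exact absurd (mul_eq_right.1 (free.inj h).1) hσ

theorem existsUnique_smul_eq {σ : S₃} (hσ : orderOf σ = 2) : ∃! p : Point, σ • p = p := by
  have ne_one : σ ≠ 1 := by
    rintro rfl
    simp at hσ
  obtain ⟨i, hi, unique⟩ := perm_existsUnique_fixed σ hσ
  refine ⟨base i, congrArg base hi, fun p hp => ?_⟩
  obtain ⟨j, rfl, hj⟩ := eq_base_of_smul_eq ne_one hp
  rw [unique j hj]

end Point

/-- An ordered triple of distinct points. -/
abbrev Triple : Type := Fin 3 ↪ Point

namespace Triple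

/-- The first factor moves the points of a triple, the second one rearranges its positions. -/
instance : MulAction (S₃ × S₃) Triple where
  smul x T := ⟨fun i => x.1 • T (x.2⁻¹ i),
    (MulAction.injective x.1).comp (T.injective.comp x.2⁻¹.injective)⟩
  one_smul T := DFunLike.ext _ _ fun i => one_smul _ (T i)
  mul_smul x x' T := DFunLike.ext _ _ fun i => mul_smul x.1 x'.1 (T (x'.2⁻¹ (x.2⁻¹ i)))

theorem smul_apply (x : S₃ × S₃) (T : Triple) (i : Fin 3) : (x • T) i = x.1 • T (x.2⁻¹ i) := rfl

/-- The triple of the three base points. -/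
def base : Triple := ⟨Point.base, fun _ _ => Point.base.inj⟩

theorem diag_smul_base (σ : S₃) : (σ, σ) • base = base :=
  DFunLike.ext _ _ fun i => congrArg Point.base (σ.apply_symm_apply i)

theorem eq_one_of_forall_smul_eq {σ : S₃} {T : Triple} (h : ∀ i, σ • T i = T i) : σ = 1 := by
  by_contra hσ
  obtain ⟨i, hi, hσi⟩ := Point.eq_base_of_smul_eq hσ (h 0)
  obtain ⟨j, hj, hσj⟩ := Point.eq_base_of_smul_eq hσ (h 1)
  refine hσ (perm_eq_one_of_two_fixed σ i j hσi hσj ?_)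
  rintro rfl
  exact absurd (T.injective (hi.trans hj.symm)) (by decide)

/-- Both projections of the stabilizer of `T` to `S₃` are injective, hence conjugate. -/
theorem exists_diagonal_stabilizer (T : Triple) :
    ∃ τ : S₃, ∀ x : S₃ × S₃, x • ((1, τ) : S₃ × S₃) • T = ((1, τ) : S₃ × S₃) • T → x.1 = x.2 := by
  let K := MulAction.stabilizer (S₃ × S₃) T
  have smul_apply_eq (x : K) (i : Fin 3) : (x : S₃ × S₃).1 • T ((x : S₃ × S₃).2⁻¹ i) = T i :=
    DFunLike.congr_fun x.2 i
  have fst_injective : Function.Injective ((MonoidHom.fst S₃ S₃).comp K.subtype) := by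
    refine (injective_iff_map_eq_one _).2 fun x (hx : (x : S₃ × S₃).1 = 1) => ?_
    refine Subtype.ext (Prod.ext hx (inv_eq_one.1 (Equiv.ext fun i => T.injective ?_)))
    rw [Equiv.Perm.one_apply, ← smul_apply_eq x i, hx, one_smul]
  have snd_injective : Function.Injective ((MonoidHom.snd S₃ S₃).comp K.subtype) := by
    refine (injective_iff_map_eq_one _).2 fun x (hx : (x : S₃ × S₃).2 = 1) => ?_
    refine Subtype.ext (Prod.ext (eq_one_of_forall_smul_eq (T := T) fun i => ?_) hx)
    simpa only [hx, inv_one, Equiv.Perm.one_apply] using smul_apply_eq x i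
  obtain ⟨τ, hτ⟩ := exists_conj_of_injective snd_injective fst_injective
  refine ⟨τ, fun x hx => ?_⟩
  have mem : ((1, τ) : S₃ × S₃)⁻¹ * x * (1, τ) ∈ K := by
    rw [MulAction.mem_stabilizer_iff, mul_smul, mul_smul, hx, inv_smul_smul]
  simpa [mul_assoc] using hτ ⟨_, mem⟩

end Triple

/-- A letter of the free group. Its triple prescribes which base points it has to fix, and the tag
provides infinitely many letters with the same prescription. -/
@[ext]
structure Letter where
  triple : Triple
  tag : ℕ
  triple_ne : triple ≠ Triple.base

namespace Letter

instance : MulAction S₃ Letter where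
  smul σ y := ⟨(σ, σ) • y.triple, y.tag, fun h =>
    y.triple_ne (MulAction.injective (σ, σ) (h.trans (Triple.diag_smul_base σ).symm))⟩
  one_smul y := Letter.ext (one_smul (S₃ × S₃) y.triple) rfl
  mul_smul σ τ y := Letter.ext (mul_smul (σ, σ) (τ, τ) y.triple) rfl

theorem smul_triple_apply (σ : S₃) (y : Letter) (i : Fin 3) :
    (σ • y).triple (σ i) = σ • y.triple i :=
  congrArg (fun j => σ • y.triple j) (σ.symm_apply_apply i)

instance : Countable Letter :=
  Function.Injective.countable (f := fun y : Letter => ((y.triple : Fin 3 → Point), y.tag))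
    fun _ _ h => Letter.ext (DFunLike.coe_injective (Prod.ext_iff.1 h).1) (Prod.ext_iff.1 h).2

end Letter

end Triples

section PartialActions

variable {E E' : Set (Letter × Point × Point)} {Φ : Triple → FreeGroup Letter}
  {f : FreeGroup Letter} {y : Letter} {U V : Triple}

/-- The edges `(y, base i, base i)` forced by symmetry: a permutation of the base points fixing `y`
and only the base point `i` commutes with the action of `y`. -/
def loops : Set (Letter × Point × Point) :=
  {e | ∃ i, e.2 = (Point.base i, Point.base i) ∧ e.1.triple i = Point.base i}

/-- The graph induced on triples by a partial action `E` of the letters on points. -/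
def tripleGraph (E : Set (Letter × Point × Point)) (y : Letter) (U V : Triple) : Prop :=
  ∀ i, (y, U i, V i) ∈ E

/-- An equivariant way to write every triple as a translate of a root of its component in
`tripleGraph E`. Its existence says that closed walks in `tripleGraph E` spell `1`, even modulo
the symmetries. -/
structure IsPotential (E : Set (Letter × Point × Point)) (Φ : Triple → FreeGroup Letter) :
    Prop where
  step : ∀ {y U V}, tripleGraph E y U V → Φ V = FreeGroup.of y * Φ U
  smul : ∀ (x : S₃ × S₃) U, Φ (x • U) = x.1 • Φ U
  exists_root : ∀ U, ∃ T, Reaches (tripleGraph E) (Φ U) T U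
  base : Φ Triple.base = 1

/-- The finite approximations, up to `loops`, of the action of the letters on `Point`. -/
structure IsAdmissible (E : Set (Letter × Point × Point)) : Prop where
  biUnique : ∀ y, Relator.BiUnique fun p q => (y, p, q) ∈ E
  smul_mem : ∀ (σ : S₃) {e}, e ∈ E → σ • e ∈ E
  loops_subset : loops ⊆ E
  finite_diff : (E \ loops).Finite
  exists_isPotential : ∃ Φ, IsPotential E Φ

theorem tripleGraph_mono (h : E ⊆ E') : ∀ y U V, tripleGraph E y U V → tripleGraph E' y U V :=
  fun _ _ _ hE i => h (hE i)

theorem tripleGraph_biUnique (hE : ∀ y, Relator.BiUnique fun p q => (y, p, q) ∈ E) (y : Letter) :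
    Relator.BiUnique (tripleGraph E y) :=
  ⟨fun _ _ _ h h' => DFunLike.ext _ _ fun i => (hE y).1 (h i) (h' i),
    fun _ _ _ h h' => DFunLike.ext _ _ fun i => (hE y).2 (h i) (h' i)⟩

theorem tripleGraph_smul (hE : ∀ (σ : S₃) {e}, e ∈ E → σ • e ∈ E) (x : S₃ × S₃)
    (h : tripleGraph E y U V) : tripleGraph E (x.1 • y) (x • U) (x • V) :=
  fun i => hE x.1 (h (x.2⁻¹ i))

theorem Reaches.smul (hE : ∀ (σ : S₃) {e}, e ∈ E → σ • e ∈ E) (x : S₃ × S₃)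
    (h : Reaches (tripleGraph E) f U V) :
    Reaches (tripleGraph E) (x.1 • f) (x • U) (x • V) :=
  h.map (MulDistribMulAction.toMonoidHom _ x.1) (x • ·) fun y _ _ hy => by
    rw [MulDistribMulAction.toMonoidHom_apply, smul_of]
    exact .edge (tripleGraph_smul hE x hy)

namespace IsPotential

theorem of_reaches (hΦ : IsPotential E Φ) (h : Reaches (tripleGraph E) f U V) :
    Φ V = f * Φ U := by
  induction h with
  | refl => rw [one_mul]
  | forward _ hy ih => rw [hΦ.step hy, ih, mul_assoc]
  | backward _ hy ih => rw [mul_assoc, eq_inv_mul_iff_mul_eq, ← hΦ.step hy, ih]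

theorem eq_one_of_reaches_smul_base (hΦ : IsPotential E Φ) {x : S₃ × S₃}
    (h : Reaches (tripleGraph E) f (x • Triple.base) Triple.base) : f = 1 := by
  simpa only [hΦ.smul, hΦ.base, smul_one, mul_one, eq_comm] using hΦ.of_reaches h

/-- Besides the triples whose root is kept, `E'` has triples `V` with a new root; `R V b` says that
`b` leads to `V` from there. -/
theorem extend (hΦ : IsPotential E Φ) (hsub : E ⊆ E') {R : Triple → FreeGroup Letter → Prop}
    (unique : Relator.RightUnique R) (smul : ∀ (x : S₃ × S₃) {U b}, R U b → R (x • U) (x.1 • b))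
    (base : ¬∃ b, R Triple.base b)
    (root : ∀ {U b}, R U b → ∃ T, Reaches (tripleGraph E') b T U)
    (step : ∀ {y U V}, tripleGraph E' y U V →
      (∃ b, R U b ∧ R V (FreeGroup.of y * b)) ∨
      ((¬∃ b, R U b) ∧ R V (FreeGroup.of y * Φ U)) ∨
      ((¬∃ b, R U b) ∧ (¬∃ b, R V b) ∧ tripleGraph E y U V)) :
    ∃ Ψ, IsPotential E' Ψ := by
  obtain ⟨Ψ, Ψ_new, Ψ_old, Ψ_smul⟩ := exists_equivariant_extension unique smul hΦ.smul
  refine ⟨Ψ, fun h => ?_, Ψ_smul, fun U => ?_, (Ψ_old _ base).trans hΦ.base⟩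
  · rcases step h with ⟨b, hU, hV⟩ | ⟨hU, hV⟩ | ⟨hU, hV, hE⟩
    · rw [Ψ_new _ _ hU, Ψ_new _ _ hV]
    · rw [Ψ_old _ hU, Ψ_new _ _ hV]
    · rw [Ψ_old _ hU, Ψ_old _ hV, hΦ.step hE]
  · by_cases hU : ∃ b, R U b
    · obtain ⟨b, hb⟩ := hU
      exact Ψ_new _ _ hb ▸ root hb
    · obtain ⟨T, hT⟩ := hΦ.exists_root U
      exact ⟨T, Ψ_old _ hU ▸ hT.mono (tripleGraph_mono hsub)⟩

end IsPotential

section Loops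

theorem eq_of_mem_loops {p q : Point} (h : (y, p, q) ∈ loops) : p = q := by
  obtain ⟨i, hpq, -⟩ := h
  exact (Prod.ext_iff.1 hpq).1.trans (Prod.ext_iff.1 hpq).2.symm

theorem smul_mem_loops (σ : S₃) {e : Letter × Point × Point} (he : e ∈ loops) :
    σ • e ∈ loops := by
  obtain ⟨y, p, q⟩ := e
  obtain ⟨i, hpq, hy⟩ := he
  obtain ⟨rfl, rfl⟩ := Prod.ext_iff.1 hpq
  exact ⟨σ i, rfl, (Letter.smul_triple_apply σ y i).trans (congrArg (σ • ·) hy)⟩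

theorem not_tripleGraph_loops : ¬tripleGraph loops y U V := by
  intro h
  choose j hj hy using h
  have base_eq (i : Fin 3) : U i = Point.base (j i) := (Prod.ext_iff.1 (hj i)).1
  have j_injective : Function.Injective j := fun i i' h =>
    U.injective (by rw [base_eq, base_eq, h])
  refine y.triple_ne (DFunLike.ext _ _ fun i => ?_)
  obtain ⟨i, rfl⟩ := Finite.surjective_of_injective j_injective i
  exact hy i

theorem isAdmissible_loops : IsAdmissible loops where
  biUnique _ := ⟨fun _ _ _ h h' => (eq_of_mem_loops h).trans (eq_of_mem_loops h').symm,
    fun _ _ _ h h' => (eq_of_mem_loops h).symm.trans (eq_of_mem_loops h')⟩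
  smul_mem := smul_mem_loops
  loops_subset := subset_rfl
  finite_diff := by simp only [sdiff_self, Set.bot_eq_empty, Set.finite_empty]
  exists_isPotential := ⟨1, fun h => absurd h not_tripleGraph_loops,
    fun x _ => (smul_one x.1).symm, fun U => ⟨U, .refl U⟩, rfl⟩

end Loops

section Reverse

/-- The partial action of the inverses of the letters. -/
def reversed (E : Set (Letter × Point × Point)) : Set (Letter × Point × Point) :=
  {e | (e.1, e.2.2, e.2.1) ∈ E}

theorem IsPotential.reverse (hΦ : IsPotential E Φ) :
    IsPotential (reversed E) (FreeGroup.lift (fun y => (FreeGroup.of y)⁻¹) ∘ Φ) where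
  step {y U V} h := by
    have hUV : Φ U = FreeGroup.of y * Φ V := hΦ.step h
    rw [Function.comp_apply, Function.comp_apply, hUV, map_mul, FreeGroup.lift_apply_of,
      mul_inv_cancel_left]
  smul x U := by
    have invert_smul (f : FreeGroup Letter) :
        FreeGroup.lift (fun y => (FreeGroup.of y)⁻¹) (x.1 • f) =
          x.1 • FreeGroup.lift (fun y => (FreeGroup.of y)⁻¹) f := by
      induction f using FreeGroup.induction_on with
      | C1 => simp only [smul_one, map_one]
      | of y => simp only [smul_of, FreeGroup.lift_apply_of, smul_inv']
      | inv_of y ih => rw [smul_inv', map_inv, ih, map_inv, smul_inv']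
      | mul f g ihf ihg => rw [smul_mul', map_mul, ihf, ihg, map_mul, smul_mul']
    exact (congrArg _ (hΦ.smul x U)).trans (invert_smul _)
  exists_root U :=
    let ⟨T, hT⟩ := hΦ.exists_root U
    ⟨T, hT.map _ id fun y p q h => by
      rw [FreeGroup.lift_apply_of]
      exact (Reaches.edge (E := tripleGraph (reversed E)) (p := q) h).symm⟩
  base := by rw [Function.comp_apply, hΦ.base, map_one]

theorem IsAdmissible.reverse (hE : IsAdmissible E) : IsAdmissible (reversed E) where
  biUnique y := ⟨fun _ _ _ h h' => (hE.biUnique y).2 h h', fun _ _ _ h h' => (hE.biUnique y).1 h h'⟩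
  smul_mem σ _ he := hE.smul_mem σ he
  loops_subset := by
    rintro ⟨y, p, q⟩ h
    obtain rfl := eq_of_mem_loops h
    exact hE.loops_subset h
  finite_diff := by
    refine (hE.finite_diff.image fun e => (e.1, e.2.2, e.2.1)).subset ?_
    rintro ⟨y, p, q⟩ ⟨h, hloop⟩
    refine ⟨(y, q, p), ⟨h, fun hqp => ?_⟩, rfl⟩
    obtain rfl := eq_of_mem_loops hqp
    exact hloop hqp
  exists_isPotential :=
    let ⟨_, hΦ⟩ := hE.exists_isPotential
    ⟨_, hΦ.reverse⟩

end Reverse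

end PartialActions

section Extensions

variable {E : Set (Letter × Point × Point)} {Φ : Triple → FreeGroup Letter}

section AddEdge

variable {a : Letter} {p : Point} {m : ℕ}

/-- The extension of a partial action sending `p` under `a`, and equivariantly all its translates,
to the free orbit of level `m`. -/
def withEdge (E : Set (Letter × Point × Point)) (a : Letter) (p : Point) (m : ℕ) :
    Set (Letter × Point × Point) :=
  E ∪ MulAction.orbit S₃ (a, p, Point.free 1 m)

/-- The free orbit of level `m` does not meet the partial action `E`. -/
def IsFreshLevel (E : Set (Letter × Point × Point)) (m : ℕ) : Prop :=
  ∀ e ∈ E, e.2.1.level ≠ some m ∧ e.2.2.level ≠ some m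

theorem IsAdmissible.exists_isFreshLevel (hE : IsAdmissible E) (p : Point) :
    ∃ m, IsFreshLevel E m ∧ p.level ≠ some m := by
  let used : Set (Option ℕ) :=
    (fun e => e.2.1.level) '' (E \ loops) ∪ (fun e => e.2.2.level) '' (E \ loops) ∪ {p.level}
  have finite_used : used.Finite :=
    ((hE.finite_diff.image _).union (hE.finite_diff.image _)).union (Set.finite_singleton _)
  obtain ⟨m, hm⟩ :=
    (finite_used.preimage (f := some) (Option.some_injective ℕ).injOn).exists_notMem
  refine ⟨m, fun e he => ?_, fun h => hm (.inr h.symm)⟩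
  by_cases hloop : e ∈ loops
  · obtain ⟨i, hi, -⟩ := hloop
    rw [hi]
    exact ⟨nofun, nofun⟩
  · exact ⟨fun h => hm (.inl (.inl ⟨e, ⟨he, hloop⟩, h⟩)),
      fun h => hm (.inl (.inr ⟨e, ⟨he, hloop⟩, h⟩))⟩

theorem mem_withEdge {y : Letter} {u v : Point} : (y, u, v) ∈ withEdge E a p m ↔
    (y, u, v) ∈ E ∨ ∃ σ : S₃, y = σ • a ∧ u = σ • p ∧ v = Point.free σ m := by
  refine or_congr_right (exists_congr fun σ => ?_)
  have smul_eq : σ • (a, p, Point.free 1 m) = (σ • a, σ • p, Point.free σ m) := by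
    rw [Prod.smul_mk, Prod.smul_mk, Point.smul_free, mul_one]
  change σ • (a, p, Point.free 1 m) = _ ↔ _
  rw [smul_eq, eq_comm, Prod.mk.injEq, Prod.mk.injEq]

theorem withEdge_smul_mem (smul_mem : ∀ (σ : S₃) {e}, e ∈ E → σ • e ∈ E) (σ : S₃)
    {e : Letter × Point × Point} (he : e ∈ withEdge E a p m) : σ • e ∈ withEdge E a p m :=
  he.imp (smul_mem σ) (MulAction.mem_orbit_of_mem_orbit σ)

/-- A nontrivial symmetry fixing `a` and `p` would give a loop of `a` at `p`. -/
theorem eq_one_of_smul_eq (loops_subset : loops ⊆ E) (h : ∀ q, (a, p, q) ∉ E) {σ : S₃}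
    (ha : σ • a = a) (hp : σ • p = p) : σ = 1 := by
  by_contra hσ
  obtain ⟨i, rfl, hi⟩ := Point.eq_base_of_smul_eq hσ hp
  have fixed : σ • a.triple i = a.triple i := by
    rw [← Letter.smul_triple_apply, ha, hi]
  obtain ⟨j, hj, hσj⟩ := Point.eq_base_of_smul_eq hσ fixed
  obtain rfl : i = j := by
    by_contra hij
    exact hσ (perm_eq_one_of_two_fixed σ i j hi hσj hij)
  exact h _ (loops_subset ⟨i, rfl, hj⟩)

theorem IsAdmissible.withEdge_biUnique (hE : IsAdmissible E) (h : ∀ q, (a, p, q) ∉ E)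
    (hm : IsFreshLevel E m) (y : Letter) :
    Relator.BiUnique fun u v => (y, u, v) ∈ withEdge E a p m := by
  have not_old {σ : S₃} {v : Point} : (σ • a, σ • p, v) ∉ E := fun hv =>
    h (σ⁻¹ • v) (by simpa only [Prod.smul_mk, inv_smul_smul] using hE.smul_mem σ⁻¹ hv)
  have fresh {u : Point} {σ : S₃} {b : Letter} : (b, u, Point.free σ m) ∉ E :=
    fun hu => (hm _ hu).2 rfl
  refine ⟨fun u v u' hu hu' => ?_, fun u v v' hv hv' => ?_⟩
  · rcases mem_withEdge.1 hu with hu | ⟨σ, -, rfl, rfl⟩ <;>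
      rcases mem_withEdge.1 hu' with hu' | ⟨τ, -, rfl, hτ⟩
    · exact (hE.biUnique y).1 hu hu'
    · exact absurd (hτ ▸ hu) fresh
    · exact absurd hu' fresh
    · rw [(Point.free.inj hτ).1]
  · rcases mem_withEdge.1 hv with hv | ⟨σ, rfl, rfl, rfl⟩ <;>
      rcases mem_withEdge.1 hv' with hv' | ⟨τ, hτa, hτp, rfl⟩
    · exact (hE.biUnique y).2 hv hv'
    · exact absurd (hτa ▸ hτp ▸ hv) not_old
    · exact absurd hv' not_old
    · have stab : τ⁻¹ * σ = 1 := eq_one_of_smul_eq hE.loops_subset h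
        (by rw [mul_smul, hτa, inv_smul_smul]) (by rw [mul_smul, hτp, inv_smul_smul])
      rw [inv_mul_eq_one.1 stab]

/-- The triple `V` meets the free orbit of level `m`. -/
def Meets (m : ℕ) (V : Triple) : Prop := ∃ i, (V i).level = some m

theorem Meets.smul (x : S₃ × S₃) {V : Triple} : Meets m V → Meets m (x • V) := fun ⟨i, hi⟩ =>
  ⟨x.2 i, by
    rw [Triple.smul_apply, Point.level_smul, Equiv.Perm.inv_def, Equiv.symm_apply_apply, hi]⟩

theorem IsFreshLevel.not_meets_source (hm : IsFreshLevel E m) (hp : p.level ≠ some m) {y : Letter}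
    {U V : Triple} (h : tripleGraph (withEdge E a p m) y U V) : ¬Meets m U := by
  rintro ⟨i, hi⟩
  rcases mem_withEdge.1 (h i) with hU | ⟨σ, -, hU, -⟩
  · exact (hm _ hU).1 hi
  · exact hp (by rwa [hU, Point.level_smul] at hi)

theorem IsFreshLevel.label_unique (hm : IsFreshLevel E m) {y y' : Letter} {u u' v : Point}
    (h : (y, u, v) ∈ withEdge E a p m) (h' : (y', u', v) ∈ withEdge E a p m)
    (hv : v.level = some m) : y = y' := by
  obtain ⟨σ, rfl, -, hσ⟩ := (mem_withEdge.1 h).resolve_left fun h => (hm _ h).2 hv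
  obtain ⟨τ, rfl, -, hτ⟩ := (mem_withEdge.1 h').resolve_left fun h => (hm _ h).2 hv
  rw [(Point.free.inj (hσ.symm.trans hτ)).1]

theorem IsPotential.addEdge (hΦ : IsPotential E Φ)
    (smul_mem : ∀ (σ : S₃) {e}, e ∈ E → σ • e ∈ E)
    (biUnique : ∀ y, Relator.BiUnique fun u v => (y, u, v) ∈ withEdge E a p m)
    (hm : IsFreshLevel E m) (hp : p.level ≠ some m) : ∃ Ψ, IsPotential (withEdge E a p m) Ψ := by
  let R (V : Triple) (b : FreeGroup Letter) : Prop :=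
    Meets m V ∧ ∃ y U, tripleGraph (withEdge E a p m) y U V ∧ FreeGroup.of y * Φ U = b
  refine hΦ.extend (R := R) Set.subset_union_left ?unique ?smul ?base ?root ?step
  case unique =>
    rintro V _ _ ⟨⟨i, hi⟩, y, U, hU, rfl⟩ ⟨-, y', U', hU', rfl⟩
    obtain rfl := hm.label_unique (hU i) (hU' i) hi
    rw [(tripleGraph_biUnique biUnique _).1 hU hU']
  case smul =>
    rintro x V _ ⟨hV, y, U, hU, rfl⟩
    refine ⟨hV.smul x, x.1 • y, x • U, tripleGraph_smul (withEdge_smul_mem smul_mem) x hU, ?_⟩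
    rw [hΦ.smul, smul_mul', smul_of]
  case base =>
    rintro ⟨_, ⟨i, hi⟩, -⟩
    exact nomatch hi
  case root =>
    rintro V _ ⟨-, y, U, hU, rfl⟩
    obtain ⟨T, hT⟩ := hΦ.exists_root U
    exact ⟨T, (hT.mono (tripleGraph_mono Set.subset_union_left)).forward hU⟩
  case step =>
    intro y U V h
    have hU : ¬∃ b, R U b := fun ⟨_, hU, _⟩ => hm.not_meets_source hp h hU
    by_cases hV : Meets m V
    · exact .inr (.inl ⟨hU, hV, y, U, h, rfl⟩)
    · refine .inr (.inr ⟨hU, fun ⟨_, hV', _⟩ => hV hV', fun i => ?_⟩)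
      refine (mem_withEdge.1 (h i)).resolve_right ?_
      rintro ⟨σ, -, -, hσ⟩
      exact hV ⟨i, congrArg Point.level hσ⟩

theorem IsAdmissible.addEdge (hE : IsAdmissible E) (h : ∀ q, (a, p, q) ∉ E)
    (hm : IsFreshLevel E m) (hp : p.level ≠ some m) : IsAdmissible (withEdge E a p m) where
  biUnique := hE.withEdge_biUnique h hm
  smul_mem := withEdge_smul_mem hE.smul_mem
  loops_subset := hE.loops_subset.trans Set.subset_union_left
  finite_diff := by
    refine (hE.finite_diff.union (Set.finite_range fun σ : S₃ => σ • (a, p, Point.free 1 m))).subset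
      ?_
    rintro e ⟨he | he, hloop⟩
    exacts [.inl ⟨he, hloop⟩, .inr he]
  exists_isPotential :=
    let ⟨_, hΦ⟩ := hE.exists_isPotential
    hΦ.addEdge hE.smul_mem (hE.withEdge_biUnique h hm) hm hp

theorem IsAdmissible.exists_forward_edge (hE : IsAdmissible E) (a : Letter) (p : Point) :
    ∃ E', E ⊆ E' ∧ IsAdmissible E' ∧ ∃ q, (a, p, q) ∈ E' := by
  by_cases h : ∃ q, (a, p, q) ∈ E
  · exact ⟨E, subset_rfl, hE, h⟩
  · obtain ⟨m, hm, hp⟩ := hE.exists_isFreshLevel p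
    exact ⟨_, Set.subset_union_left, hE.addEdge (not_exists.1 h) hm hp, _,
      .inr (MulAction.mem_orbit_self _)⟩

theorem IsAdmissible.exists_backward_edge (hE : IsAdmissible E) (a : Letter) (q : Point) :
    ∃ E', E ⊆ E' ∧ IsAdmissible E' ∧ ∃ p, (a, p, q) ∈ E' :=
  let ⟨E', hsub, hE', p, hp⟩ := hE.reverse.exists_forward_edge a q
  ⟨reversed E', fun _ he => hsub he, hE'.reverse, p, hp⟩

end AddEdge

end Extensions

section AddLetter

variable {E : Set (Letter × Point × Point)} {Φ : Triple → FreeGroup Letter} {a y : Letter}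

/-- The extension of a partial action in which `a`, and equivariantly all its translates, sends the
base triple to the triple of the letter. -/
def withLetter (E : Set (Letter × Point × Point)) (a : Letter) : Set (Letter × Point × Point) :=
  E ∪ {e | e.1 ∈ MulAction.orbit S₃ a ∧ ∃ j, e.2 = (Point.base j, e.1.triple j)}

/-- In the partial action `E`, the translates of the letter `a` have no edges except `loops`. -/
def IsFreshLetter (E : Set (Letter × Point × Point)) (a : Letter) : Prop :=
  ∀ e ∈ E, e.1 ∈ MulAction.orbit S₃ a → e ∈ loops

theorem IsAdmissible.exists_isFreshLetter (hE : IsAdmissible E) {T : Triple}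
    (hT : T ≠ Triple.base) : ∃ a : Letter, a.triple = T ∧ IsFreshLetter E a := by
  obtain ⟨n, hn⟩ := (hE.finite_diff.image fun e => e.1.tag).exists_notMem
  refine ⟨⟨T, n, hT⟩, rfl, fun e he horbit => ?_⟩
  obtain ⟨σ, hσ⟩ := horbit
  by_contra hloop
  exact hn ⟨e, ⟨he, hloop⟩, congrArg Letter.tag hσ.symm⟩

theorem mem_withLetter_of_mem_orbit (ha : IsFreshLetter E a) (hy : y ∈ MulAction.orbit S₃ a)
    {u v : Point} :
    (y, u, v) ∈ withLetter E a ↔ ∃ j, u = Point.base j ∧ v = y.triple j := by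
  refine ⟨?_, fun ⟨j, hu, hv⟩ => .inr ⟨hy, j, Prod.ext hu hv⟩⟩
  rintro (h | ⟨-, j, hj⟩)
  · obtain ⟨j, hj, hyj⟩ := ha _ h hy
    exact ⟨j, (Prod.ext_iff.1 hj).1, (Prod.ext_iff.1 hj).2.trans hyj.symm⟩
  · exact ⟨j, Prod.ext_iff.1 hj⟩

theorem mem_withLetter_of_notMem_orbit (hy : y ∉ MulAction.orbit S₃ a) {u v : Point} :
    (y, u, v) ∈ withLetter E a ↔ (y, u, v) ∈ E :=
  or_iff_left fun h => hy h.1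

theorem withLetter_biUnique (hE : ∀ y, Relator.BiUnique fun u v => (y, u, v) ∈ E)
    (ha : IsFreshLetter E a) (y : Letter) :
    Relator.BiUnique fun u v => (y, u, v) ∈ withLetter E a := by
  by_cases hy : y ∈ MulAction.orbit S₃ a
  · simp only [mem_withLetter_of_mem_orbit ha hy]
    refine ⟨?_, ?_⟩
    · rintro _ _ _ ⟨i, rfl, rfl⟩ ⟨j, rfl, hij⟩
      rw [y.triple.injective hij]
    · rintro _ _ _ ⟨i, rfl, rfl⟩ ⟨j, hij, rfl⟩
      rw [Point.base.inj hij]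
  · simpa only [mem_withLetter_of_notMem_orbit hy] using hE y

theorem withLetter_smul_mem (hE : ∀ (σ : S₃) {e}, e ∈ E → σ • e ∈ E) (σ : S₃)
    {e : Letter × Point × Point} (he : e ∈ withLetter E a) : σ • e ∈ withLetter E a := by
  refine he.imp (hE σ) ?_
  obtain ⟨y, endpoints⟩ := e
  rintro ⟨hy, j, hj : endpoints = (Point.base j, y.triple j)⟩
  subst hj
  exact ⟨MulAction.mem_orbit_of_mem_orbit σ hy, σ j,
    congrArg (Prod.mk _) (Letter.smul_triple_apply σ y j).symm⟩

theorem exists_of_tripleGraph_withLetter (ha : IsFreshLetter E a)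
    (hy : y ∈ MulAction.orbit S₃ a) {U V : Triple} (h : tripleGraph (withLetter E a) y U V) :
    ∃ τ : S₃, U = ((1, τ) : S₃ × S₃) • Triple.base ∧ V = ((1, τ) : S₃ × S₃) • y.triple := by
  choose j hjU hjV using fun i => (mem_withLetter_of_mem_orbit ha hy).1 (h i)
  have j_injective : Function.Injective j := fun i i' h =>
    U.injective (by rw [hjU, hjU, h])
  let τ : S₃ := Equiv.ofBijective j (Finite.injective_iff_bijective.1 j_injective)
  exact ⟨τ⁻¹, DFunLike.ext _ _ hjU, DFunLike.ext _ _ fun i => (hjV i).trans (one_smul _ _).symm⟩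

theorem tripleGraph_withLetter (a : Letter) :
    tripleGraph (withLetter E a) a Triple.base a.triple :=
  fun i => .inr ⟨MulAction.mem_orbit_self a, i, rfl⟩

theorem letter_smul_eq (stabilizer : ∀ x : S₃ × S₃, x • a.triple = a.triple → x.1 = x.2)
    {x x' : S₃ × S₃} (h : x • a.triple = x' • a.triple) : x.1 • a = x'.1 • a := by
  have fixes : (x'⁻¹ * x) • a.triple = a.triple := by rw [mul_smul, h, inv_smul_smul]
  have diagonal : ((x'⁻¹ * x).1, (x'⁻¹ * x).1) = x'⁻¹ * x := Prod.ext rfl (stabilizer _ fixes)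
  have fixes_letter : (x'⁻¹ * x).1 • a = a :=
    Letter.ext ((congrArg (· • a.triple) diagonal).trans fixes) rfl
  rwa [Prod.fst_mul, Prod.fst_inv, mul_smul, inv_smul_eq_iff] at fixes_letter

/-- `ReachesThrough E a V b`: a walk of `E` that is preceded by a translate of the edge labelled `a`
from the base triple to `a.triple` leads to `V`, and `b` is what it spells. -/
def ReachesThrough (E : Set (Letter × Point × Point)) (a : Letter) (V : Triple)
    (b : FreeGroup Letter) : Prop :=
  ∃ (x : S₃ × S₃) (f : FreeGroup Letter), Reaches (tripleGraph E) f (x • a.triple) V ∧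
    f * FreeGroup.of (x.1 • a) = b

theorem ReachesThrough.smul (hE : ∀ (σ : S₃) {e}, e ∈ E → σ • e ∈ E) (x : S₃ × S₃) {V : Triple}
    {b : FreeGroup Letter} :
    ReachesThrough E a V b → ReachesThrough E a (x • V) (x.1 • b) := by
  rintro ⟨x', f, hf, rfl⟩
  refine ⟨x * x', x.1 • f, mul_smul x x' a.triple ▸ hf.smul hE x, ?_⟩
  rw [smul_mul', smul_of, Prod.fst_mul, mul_smul]

theorem ReachesThrough.trans {U V : Triple} {b f : FreeGroup Letter} :
    ReachesThrough E a U b → Reaches (tripleGraph E) f U V → ReachesThrough E a V (f * b) := by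
  rintro ⟨x, g, hg, rfl⟩ hf
  exact ⟨x, f * g, hg.trans hf, mul_assoc _ _ _⟩

theorem IsPotential.reachesThrough_rightUnique (hΦ : IsPotential E Φ)
    (hE : ∀ y, Relator.BiUnique fun u v => (y, u, v) ∈ E) (root : Φ a.triple = 1)
    (stabilizer : ∀ x : S₃ × S₃, x • a.triple = a.triple → x.1 = x.2) :
    Relator.RightUnique (ReachesThrough E a) := by
  rintro V _ _ ⟨x, f, hf, rfl⟩ ⟨x', f', hf', rfl⟩
  have potential_eq {x : S₃ × S₃} {f} (h : Reaches (tripleGraph E) f (x • a.triple) V) :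
      Φ V = f := by
    rw [hΦ.of_reaches h, hΦ.smul, root, smul_one, mul_one]
  obtain rfl : f = f' := (potential_eq hf).symm.trans (potential_eq hf')
  rw [letter_smul_eq stabilizer (hf.source_unique (tripleGraph_biUnique hE) hf')]

theorem IsPotential.addLetter (hΦ : IsPotential E Φ) (hE : IsAdmissible E)
    (ha : IsFreshLetter E a) (root : Φ a.triple = 1)
    (stabilizer : ∀ x : S₃ × S₃, x • a.triple = a.triple → x.1 = x.2)
    (separate : ∀ (x : S₃ × S₃) f, ¬Reaches (tripleGraph E) f (x • a.triple) Triple.base) :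
    ∃ Ψ, IsPotential (withLetter E a) Ψ := by
  have not_through_base (x : S₃ × S₃) : ¬∃ b, ReachesThrough E a (x • Triple.base) b :=
    fun ⟨b, hb⟩ => by
      obtain ⟨x', f, hf, -⟩ := inv_smul_smul x Triple.base ▸ hb.smul hE.smul_mem x⁻¹
      exact separate x' f hf
  refine hΦ.extend Set.subset_union_left
    (hΦ.reachesThrough_rightUnique hE.biUnique root stabilizer) (.smul hE.smul_mem) ?base ?root
    fun {y U V} h => ?step
  case base => exact one_smul (S₃ × S₃) Triple.base ▸ not_through_base 1
  case root =>
    rintro V _ ⟨x, f, hf, rfl⟩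
    have edge := tripleGraph_smul (withLetter_smul_mem hE.smul_mem) x (tripleGraph_withLetter a)
    exact ⟨_, (Reaches.edge edge).trans (hf.mono (tripleGraph_mono Set.subset_union_left))⟩
  case step =>
    by_cases hy : y ∈ MulAction.orbit S₃ a
    · obtain ⟨τ, rfl, rfl⟩ := exists_of_tripleGraph_withLetter ha hy h
      obtain ⟨σ, rfl⟩ := hy
      refine .inr (.inl ⟨not_through_base _, (1, τ) * (σ, σ), 1, ?_, ?_⟩)
      · rw [mul_smul]
        exact .refl _
      · rw [hΦ.smul, hΦ.base, smul_one, mul_one, one_mul, Prod.fst_mul, one_mul]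
    · have edge : tripleGraph E y U V := fun i => (mem_withLetter_of_notMem_orbit hy).1 (h i)
      by_cases hU : ∃ b, ReachesThrough E a U b
      · obtain ⟨b, hb⟩ := hU
        exact .inl ⟨b, hb, hb.trans (.edge edge)⟩
      · exact .inr (.inr ⟨hU, fun ⟨b, hb⟩ => hU ⟨_, hb.trans (Reaches.edge edge).symm⟩, edge⟩)

theorem IsAdmissible.addLetter (hE : IsAdmissible E) (hΦ : IsPotential E Φ)
    (ha : IsFreshLetter E a) (root : Φ a.triple = 1)
    (stabilizer : ∀ x : S₃ × S₃, x • a.triple = a.triple → x.1 = x.2)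
    (separate : ∀ (x : S₃ × S₃) f, ¬Reaches (tripleGraph E) f (x • a.triple) Triple.base) :
    IsAdmissible (withLetter E a) where
  biUnique := withLetter_biUnique hE.biUnique ha
  smul_mem := withLetter_smul_mem hE.smul_mem
  loops_subset := hE.loops_subset.trans Set.subset_union_left
  finite_diff := by
    refine (hE.finite_diff.union (Set.finite_range fun x : S₃ × Fin 3 =>
      (x.1 • a, Point.base x.2, (x.1 • a).triple x.2))).subset ?_
    rintro ⟨y, endpoints⟩ ⟨he | ⟨⟨σ, rfl⟩, j, hj⟩, hloop⟩
    exacts [.inl ⟨he, hloop⟩, .inr ⟨(σ, j), congrArg (Prod.mk _) hj.symm⟩]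
  exists_isPotential := hΦ.addLetter hE ha root stabilizer separate

theorem IsAdmissible.exists_reaches (hE : IsAdmissible E) (T : Triple) :
    ∃ E', E ⊆ E' ∧ IsAdmissible E' ∧
      ∃ f, ∃ x : S₃ × S₃, Reaches (tripleGraph E') f Triple.base (x • T) := by
  obtain ⟨Φ, hΦ⟩ := hE.exists_isPotential
  obtain ⟨T₁, hT₁⟩ := hΦ.exists_root T
  have root_T₁ : Φ T₁ = 1 := left_eq_mul.1 (hΦ.of_reaches hT₁)
  obtain ⟨τ, stabilizer⟩ := T₁.exists_diagonal_stabilizer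
  set T₂ := ((1, τ) : S₃ × S₃) • T₁
  have reaches (x : S₃ × S₃) :
      Reaches (tripleGraph E) (x.1 • Φ T) (x • T₂) ((x * (1, τ)) • T) := by
    have h := hT₁.smul hE.smul_mem (x * (1, τ))
    rwa [Prod.fst_mul, mul_one, mul_smul x _ T₁] at h
  by_cases separate : ∀ (x : S₃ × S₃) f, ¬Reaches (tripleGraph E) f (x • T₂) Triple.base
  · have ne_base : T₂ ≠ Triple.base := fun h =>
      separate 1 1 (by rw [one_smul, h]; exact .refl _)
    obtain ⟨a, ha_triple, ha⟩ := hE.exists_isFreshLetter ne_base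
    have root : Φ a.triple = 1 := by rw [ha_triple, hΦ.smul, root_T₁, smul_one]
    rw [← ha_triple] at stabilizer separate
    have onward : Reaches (tripleGraph E) (Φ T) a.triple (((1, τ) : S₃ × S₃) • T) := by
      simpa only [Prod.fst_one, one_smul, one_mul, ha_triple] using reaches 1
    exact ⟨withLetter E a, Set.subset_union_left,
      hE.addLetter hΦ ha root stabilizer separate, _, _,
      (Reaches.edge (tripleGraph_withLetter a)).trans
        (onward.mono (tripleGraph_mono Set.subset_union_left))⟩
  · push Not at separate
    obtain ⟨x, f, hf⟩ := separate
    exact ⟨E, subset_rfl, hE, _, _, hf.symm.trans (reaches x)⟩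

end AddLetter

section Generic

theorem exists_ideal_meeting {P ι : Type*} [Preorder P] [Nonempty P] [Countable ι]
    (D : ι → Order.Cofinal P) : ∃ I : Order.Ideal P, ∀ i, ∃ E ∈ I, E ∈ D i := by
  have : Encodable ι := Encodable.ofCountable ι
  obtain ⟨p⟩ := ‹Nonempty P›
  exact ⟨Order.idealOfCofinals p D, fun i =>
    (Order.cofinal_meets_idealOfCofinals p D i).imp fun _ => And.symm⟩

variable {I : Order.Ideal {E // IsAdmissible E}} {f : FreeGroup Letter} {U V : Triple}

/-- The partial action approximated by the members of an ideal. -/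
def limit (I : Order.Ideal {E // IsAdmissible E}) : Set (Letter × Point × Point) :=
  {e | ∃ E ∈ I, e ∈ E.1}

theorem exists_mem_of_mem_limit₂ {e e' : Letter × Point × Point} (he : e ∈ limit I)
    (he' : e' ∈ limit I) : ∃ E ∈ I, e ∈ E.1 ∧ e' ∈ E.1 := by
  obtain ⟨E₁, h₁, he⟩ := he
  obtain ⟨E₂, h₂, he'⟩ := he'
  obtain ⟨E, hE, hle₁, hle₂⟩ := I.directed E₁ h₁ E₂ h₂
  exact ⟨E, hE, hle₁ he, hle₂ he'⟩

theorem limit_biUnique (y : Letter) : Relator.BiUnique fun p q => (y, p, q) ∈ limit I := by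
  refine ⟨fun _ _ _ h h' => ?_, fun _ _ _ h h' => ?_⟩ <;>
    obtain ⟨E, -, he, he'⟩ := exists_mem_of_mem_limit₂ h h'
  exacts [(E.2.biUnique y).1 he he', (E.2.biUnique y).2 he he']

theorem limit_smul_mem (σ : S₃) {e : Letter × Point × Point} (he : e ∈ limit I) :
    σ • e ∈ limit I :=
  let ⟨E, hE, he⟩ := he
  ⟨E, hE, E.2.smul_mem σ he⟩

theorem exists_tripleGraph_of_limit {y : Letter} (h : tripleGraph (limit I) y U V) :
    ∃ E ∈ I, tripleGraph E.1 y U V := by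
  choose E hE hUV using h
  obtain ⟨E₁, hE₁, h₀, h₁⟩ := I.directed _ (hE 0) _ (hE 1)
  obtain ⟨E₂, hE₂, h₁₂, h₂⟩ := I.directed _ hE₁ _ (hE 2)
  refine ⟨E₂, hE₂, fun i => ?_⟩
  fin_cases i
  exacts [h₁₂ (h₀ (hUV 0)), h₁₂ (h₁ (hUV 1)), h₂ (hUV 2)]

theorem exists_reaches_of_limit (h : Reaches (tripleGraph (limit I)) f U V) :
    ∃ E ∈ I, Reaches (tripleGraph E.1) f U V := by
  have common {f U V y U' V'} (h : ∃ E ∈ I, Reaches (tripleGraph E.1) f U V)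
      (hy : tripleGraph (limit I) y U' V') :
      ∃ E ∈ I, Reaches (tripleGraph E.1) f U V ∧ tripleGraph E.1 y U' V' := by
    obtain ⟨E₁, h₁, hreach⟩ := h
    obtain ⟨E₂, h₂, hedge⟩ := exists_tripleGraph_of_limit hy
    obtain ⟨E, hE, hle₁, hle₂⟩ := I.directed E₁ h₁ E₂ h₂
    exact ⟨E, hE, hreach.mono (tripleGraph_mono hle₁), tripleGraph_mono hle₂ _ _ _ hedge⟩
  induction h with
  | refl U => exact I.nonempty.imp fun E hE => ⟨hE, .refl U⟩
  | forward _ hy ih => exact (common ih hy).imp fun _ h => ⟨h.1, h.2.1.forward h.2.2⟩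
  | backward _ hy ih => exact (common ih hy).imp fun _ h => ⟨h.1, h.2.1.backward h.2.2⟩

theorem exists_ideal_total : ∃ I : Order.Ideal {E // IsAdmissible E},
    (∀ y p, ∃ q, (y, p, q) ∈ limit I) ∧ (∀ y q, ∃ p, (y, p, q) ∈ limit I) ∧
      ∀ T, ∃ f, ∃ x : S₃ × S₃, Reaches (tripleGraph (limit I)) f Triple.base (x • T) := by
  have : Nonempty {E // IsAdmissible E} := ⟨⟨loops, isAdmissible_loops⟩⟩
  have : Countable Triple := DFunLike.coe_injective.countable
  let forward (a : Letter × Point) : Order.Cofinal {E // IsAdmissible E} :=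
    ⟨{E | ∃ q, (a.1, a.2, q) ∈ E.1}, fun E =>
      let ⟨E', hsub, hE', h⟩ := E.2.exists_forward_edge a.1 a.2
      ⟨⟨E', hE'⟩, h, hsub⟩⟩
  let backward (a : Letter × Point) : Order.Cofinal {E // IsAdmissible E} :=
    ⟨{E | ∃ p, (a.1, p, a.2) ∈ E.1}, fun E =>
      let ⟨E', hsub, hE', h⟩ := E.2.exists_backward_edge a.1 a.2
      ⟨⟨E', hE'⟩, h, hsub⟩⟩
  let reach (T : Triple) : Order.Cofinal {E // IsAdmissible E} :=
    ⟨{E | ∃ f, ∃ x : S₃ × S₃, Reaches (tripleGraph E.1) f Triple.base (x • T)}, fun E =>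
      let ⟨E', hsub, hE', h⟩ := E.2.exists_reaches T
      ⟨⟨E', hE'⟩, h, hsub⟩⟩
  obtain ⟨I, hI⟩ := exists_ideal_meeting (Sum.elim forward (Sum.elim backward reach))
  refine ⟨I, fun y p => ?_, fun y q => ?_, fun T => ?_⟩
  · obtain ⟨E, hE, q, h⟩ := hI (.inl (y, p))
    exact ⟨q, E, hE, h⟩
  · obtain ⟨E, hE, p, h⟩ := hI (.inr (.inl (y, q)))
    exact ⟨p, E, hE, h⟩
  · obtain ⟨E, hE, f, x, h⟩ := hI (.inr (.inr T))
    exact ⟨f, x, h.mono (tripleGraph_mono fun _ he => ⟨E, hE, he⟩)⟩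

/-- An action of the letters such that, together with the symmetries of `Point`, the free group on
them is sharply transitive on triples. -/
structure IsGeneric (π : Letter → Equiv.Perm Point) : Prop where
  smul_apply : ∀ (σ : S₃) y p, σ • π y p = π (σ • y) (σ • p)
  exists_lift_smul_base : ∀ T : Triple,
    ∃ f, ∃ x : S₃ × S₃, FreeGroup.lift π f • Triple.base = x • T
  eq_one_of_lift_smul : ∀ {f} {x : S₃ × S₃},
    FreeGroup.lift π f • x • Triple.base = Triple.base → f = 1

theorem exists_isGeneric : ∃ π, IsGeneric π := by
  obtain ⟨I, total, surjective, reach⟩ := exists_ideal_total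
  choose next hnext using total
  have next_bijective (y : Letter) : Function.Bijective (next y) :=
    ⟨fun p p' h => (limit_biUnique y).1 (hnext y p) (h ▸ hnext y p'),
      fun q => (surjective y q).imp fun p hp => (limit_biUnique y).2 (hnext y p) hp⟩
  let π (y : Letter) : Equiv.Perm Point := Equiv.ofBijective (next y) (next_bijective y)
  have mem_limit {y p q} : (y, p, q) ∈ limit I ↔ π y p = q :=
    ⟨(limit_biUnique y).2 (hnext y p), fun h => h ▸ hnext y p⟩
  have graph_eq : tripleGraph (limit I) = fun y U V => π y • U = V := by
    funext y U V
    simp only [tripleGraph, mem_limit, DFunLike.ext_iff]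
    rfl
  refine ⟨π, fun σ y p => ?_, fun T => ?_, fun {f x} h => ?_⟩
  · exact (mem_limit.1 (limit_smul_mem σ (hnext y p))).symm
  · obtain ⟨f, x, h⟩ := reach T
    exact ⟨f, x, Reaches.smul_iff.1 (graph_eq ▸ h)⟩
  · have hreach : Reaches (tripleGraph (limit I)) f (x • Triple.base) Triple.base :=
      graph_eq ▸ Reaches.smul_iff.2 h
    obtain ⟨E, -, hE⟩ := exists_reaches_of_limit hreach
    obtain ⟨Φ, hΦ⟩ := E.2.exists_isPotential
    exact hΦ.eq_one_of_reaches_smul_base hE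

end Generic

section Witness

universe u v u' v'

open SemidirectProduct

section Actions

variable {G X : Type*} [Group G] [MulAction G X]

theorem injective_vecCons {x y z : X} (hxy : x ≠ y) (hxz : x ≠ z) (hyz : y ≠ z) :
    Function.Injective ![x, y, z] := by
  simp [Function.Injective, Fin.forall_fin_succ, hxy, hxz, hyz, hxy.symm, hxz.symm, hyz.symm]

theorem sharplyThreeTransitive_of_embedding {T₀ : Fin 3 ↪ X}
    (transitive : ∀ T : Fin 3 ↪ X, ∃ g : G, g • T₀ = T) (free : ∀ g : G, g • T₀ = T₀ → g = 1) :
    SharplyThreeTransitive G X := by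
  have existsUnique (T T' : Fin 3 ↪ X) : ∃! g : G, g • T = T' := by
    obtain ⟨a, rfl⟩ := transitive T
    obtain ⟨b, rfl⟩ := transitive T'
    refine ⟨b * a⁻¹, (mul_smul _ _ _).trans (congrArg _ (inv_smul_smul a T₀)), fun g hg => ?_⟩
    have stab : b⁻¹ * (g * a) = 1 := free _ (by rw [mul_smul, mul_smul, hg, inv_smul_smul])
    rw [inv_mul_eq_one.1 stab, mul_inv_cancel_right]
  intro x y z x' y' z' hxy hxz hyz hxy' hxz' hyz'
  simpa [DFunLike.ext_iff, Fin.forall_fin_succ] using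
    existsUnique ⟨_, injective_vecCons hxy hxz hyz⟩ ⟨_, injective_vecCons hxy' hxz' hyz'⟩

theorem existsUnique_conj_smul_eq {g : G} (h : ∃! p : X, g • p = p) (k : G) :
    ∃! p : X, (k * g * k⁻¹) • p = p := by
  refine ((MulAction.toPerm k).existsUnique_congr fun {p} => ?_).1 h
  rw [MulAction.toPerm_apply, mul_smul, inv_smul_smul, mul_smul, smul_left_cancel_iff]

end Actions

namespace IsGeneric

variable {π : Letter → Equiv.Perm Point} (hπ : IsGeneric π)

/-- The action on `Point` of the free group on the letters and the symmetries together. -/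
def hom : FreeSemidirect Letter S₃ →* Equiv.Perm Point :=
  SemidirectProduct.lift (FreeGroup.lift π) (MulAction.toPermHom S₃ Point) fun σ => by
    ext y p
    change FreeGroup.lift π (σ • FreeGroup.of y) p =
      σ • FreeGroup.lift π (FreeGroup.of y) (σ⁻¹ • p)
    rw [smul_of, FreeGroup.lift_apply_of, FreeGroup.lift_apply_of, hπ.smul_apply, smul_inv_smul]

theorem hom_inl (f : FreeGroup Letter) : hπ.hom (inl f) = FreeGroup.lift π f :=
  lift_inl _ _ _ f

theorem hom_inr (σ : S₃) (p : Point) : hπ.hom (inr σ) p = σ • p :=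
  DFunLike.congr_fun (lift_inr _ _ _ σ) p

theorem sharplyThreeTransitive :
    @SharplyThreeTransitive (FreeSemidirect Letter S₃) Point _ (.compHom Point hπ.hom) := by
  let := MulAction.compHom Point hπ.hom
  refine sharplyThreeTransitive_of_embedding (T₀ := Triple.base) (fun T => ?_) fun g hg => ?_
  · obtain ⟨f, x, h⟩ := hπ.exists_lift_smul_base T
    refine ⟨inr x.1⁻¹ * inl f * inr x.2, DFunLike.ext _ _ fun i => ?_⟩
    change hπ.hom _ (Point.base i) = T i
    have h_apply : FreeGroup.lift π f (Point.base (x.2 i)) = x.1 • T i :=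
      (DFunLike.congr_fun h (x.2 i)).trans (congrArg (x.1 • T ·) (x.2.symm_apply_apply i))
    rw [map_mul, map_mul, Equiv.Perm.mul_apply, Equiv.Perm.mul_apply, hom_inr, hom_inl, hom_inr,
      Point.smul_base, h_apply, inv_smul_smul]
  · rw [← inl_left_mul_inr_right g] at hg ⊢
    have hg_apply (i : Fin 3) :
        FreeGroup.lift π g.left (g.right • Point.base i) = Point.base i := by
      rw [← hom_inl hπ, ← hom_inr hπ, ← Equiv.Perm.mul_apply, ← map_mul]
      exact DFunLike.congr_fun hg i
    have left_eq : g.left = 1 :=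
      hπ.eq_one_of_lift_smul (x := (g.right, 1)) (DFunLike.ext _ _ hg_apply)
    have right_eq : g.right = 1 := Triple.eq_one_of_forall_smul_eq (T := Triple.base) fun i => by
      have h := hg_apply i
      rwa [left_eq, map_one, Equiv.Perm.one_apply] at h
    rw [left_eq, right_eq, map_one, map_one, mul_one]

theorem existsUnique_hom_apply_eq {t : FreeSemidirect Letter S₃} (ht : orderOf t = 2) :
    ∃! p, hπ.hom t p = p := by
  obtain ⟨k, hk⟩ := FreeSemidirect.exists_conj_inr (by rw [← pow_two, ← ht, pow_orderOf_eq_one])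
  have fixed : ∃! p : Point, hπ.hom (inr t.right) • p = p := by
    simpa only [Equiv.Perm.smul_def, hom_inr] using
      Point.existsUnique_smul_eq (FreeSemidirect.orderOf_right ht)
  rw [hk, map_mul, map_mul, map_inv]
  exact existsUnique_conj_smul_eq fixed _

/-- The sharply 3-transitive action given by a generic choice of permutations. -/
def witness : SharplyThreeTransitiveCharTwoWitness where
  G := FreeSemidirect Letter S₃
  X := Point
  act := .compHom Point hπ.hom
  infinite := inferInstance
  sharply3transitive := hπ.sharplyThreeTransitive
  involutions_unique_fixed_point _ := hπ.existsUnique_hom_apply_eq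
  involutions_no_commute _ _ := FreeSemidirect.not_commute perm_eq_of_commute

end IsGeneric

theorem sharplyThreeTransitive_ulift {G X : Type*} [Group G] [MulAction G X]
    (h : SharplyThreeTransitive G X) : SharplyThreeTransitive (ULift G) (ULift X) := by
  intro x y z x' y' z' hxy hxz hyz hxy' hxz' hyz'
  refine (Equiv.ulift.existsUnique_congr fun {g} => ?_).2 <|
    h x.down y.down z.down x'.down y'.down z'.down
      (ULift.down_injective.ne hxy) (ULift.down_injective.ne hxz) (ULift.down_injective.ne hyz)
      (ULift.down_injective.ne hxy') (ULift.down_injective.ne hxz') (ULift.down_injective.ne hyz')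
  simp only [ULift.ext_iff]
  rfl

/-- The same action in larger universes. -/
def uliftWitness (W : SharplyThreeTransitiveCharTwoWitness.{u, v}) :
    SharplyThreeTransitiveCharTwoWitness.{max u u', max v v'} := by
  have : Infinite W.X := W.infinite
  let := W.grp
  let := W.act
  have orderOf_down {t : ULift.{u'} W.G} (ht : orderOf t = 2) : orderOf t.down = 2 :=
    (MulEquiv.ulift.orderOf_eq t).trans ht
  exact {
    G := ULift.{u'} W.G
    X := ULift.{v'} W.X
    infinite := inferInstance
    sharply3transitive := sharplyThreeTransitive_ulift W.sharply3transitive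
    involutions_unique_fixed_point := fun t ht =>
      (Equiv.ulift.existsUnique_congr fun {p} => (ULift.down_inj (a := t • p) (b := p)).symm).2
        (W.involutions_unique_fixed_point t.down (orderOf_down ht))
    involutions_no_commute := fun s t hs ht hst hcomm =>
      W.involutions_no_commute s.down t.down (orderOf_down hs) (orderOf_down ht)
        (ULift.down_injective.ne hst) (congrArg ULift.down hcomm) }

end Witness

end TripleAction

theorem exists_sharply_three_transitive_noncommuting_involutions :
    Nonempty SharplyThreeTransitiveCharTwoWitness := by
  obtain ⟨π, hπ⟩ := TripleAction.exists_isGeneric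
  exact ⟨TripleAction.uliftWitness hπ.witness⟩
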